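/- Let n ≥ 4 and let S be the Specht Z₂𝔖_n-lattice for the partition (n−2,1,1), realized with Z₂-basis {b(i₁,i₂) : 2 ≤ i₁ < i₂ ≤ n}. Then the set S₁ = { Σ α(i₁,i₂) b(i₁,i₂) : Σ α(i₁,i₂) ≡ 0 mod 2 } is a Z₂𝔖_n-submodule of S of index 2, and a Z₂-basis of S₁ is given by {b(i₁,i₂) + b(n−1,n) : (i₁,i₂) ≠ (n−1,n)} ∪ {2·b(n−1,n)}. -/

import Mathlib

open Finset

noncomputable section

/-- The `R`-linear map `⋀^k(f)` induced by `f`. -/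
def exteriorPowerMap {R M N : Type*} [CommRing R] [AddCommGroup M] [Module R M]
    [AddCommGroup N] [Module R N] (k : ℕ) (f : M →ₗ[R] N) : ⋀[R]^k M →ₗ[R] ⋀[R]^k N :=
  LinearMap.restrict (ExteriorAlgebra.map f).toLinearMap (p := ⋀[R]^k M) (q := ⋀[R]^k N)
    (fun x hx => by
      have h1 : Submodule.map (ExteriorAlgebra.map f).toLinearMap (⋀[R]^k M) ≤ ⋀[R]^k N := by
        rw [Submodule.map_pow]
        refine pow_le_pow_left' ?_ k
        rw [ExteriorAlgebra.ι_range_map_map]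
        exact LinearMap.map_le_range
      exact h1 (Submodule.mem_map_of_mem hx))

/-- The wedge `x ∧ y` in `⋀^2(M)`. -/
def wedgePair {R M : Type*} [CommRing R] [AddCommGroup M] [Module R M]
    (x y : M) : ⋀[R]^2 M :=
  ⟨ExteriorAlgebra.ιMulti R 2 ![x, y],
    ExteriorAlgebra.ιMulti_range R 2 (Set.mem_range_self _)⟩

variable (R : Type*) [CommRing R] (n : ℕ)

/-- The coefficient-sum functional on the natural permutation module. -/
def sumFunctional : (Fin n → R) →ₗ[R] R := ∑ i, LinearMap.proj i

/-- The natural Specht lattice `S^{(n-1,1)}`, realized as the kernel of the coefficient-sum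
functional on the natural permutation module. -/
def spechtW : Submodule R (Fin n → R) := LinearMap.ker (sumFunctional R n)

/-- The standard basis vector `e(1,i) = b_i − b_1` of the natural Specht lattice
(with `0`-based indices, index `0` playing the role of `1`). -/
def spechtE (h0 : 0 < n) (i : Fin n) : ↥(spechtW R n) :=
  ⟨Pi.single i 1 - Pi.single (⟨0, h0⟩ : Fin n) 1, by
    simp [spechtW, sumFunctional, LinearMap.mem_ker, Finset.sum_sub_distrib,
      Finset.sum_pi_single']⟩

/-- The action of `σ ∈ 𝔖_n` on the natural Specht lattice. -/
def spechtPerm (σ : Equiv.Perm (Fin n)) : ↥(spechtW R n) →ₗ[R] ↥(spechtW R n) :=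
  LinearMap.restrict (LinearMap.funLeft R R ⇑σ⁻¹)
    (fun x hx => by
      simp only [spechtW, LinearMap.mem_ker, sumFunctional, LinearMap.sum_apply,
        LinearMap.proj_apply, LinearMap.funLeft_apply] at hx ⊢
      rw [Equiv.sum_comp σ⁻¹ x]
      exact hx)

/-- The standard basis vector `b(i,j) = e(1,i) ∧ e(1,j)` of the Specht lattice
`S^{(n-2,1,1)} = ⋀²(S^{(n-1,1)})`. -/
def spechtBB (h0 : 0 < n) (i j : Fin n) : ⋀[R]^2 ↥(spechtW R n) :=
  wedgePair (spechtE R n h0 i) (spechtE R n h0 j)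

/-- The index set `{(i₁,i₂) : 2 ≤ i₁ < i₂ ≤ n}` of the standard basis of `S^{(n-2,1,1)}`
(`0`-based indices). -/
def PairIdx := {q : Fin n × Fin n // 0 < q.1.val ∧ q.1.val < q.2.val}

instance : Fintype (PairIdx n) := by unfold PairIdx; infer_instance
instance : DecidableEq (PairIdx n) := by unfold PairIdx; infer_instance

/-- The pair `(n-1, n)` (in `0`-based indices: `(n-2, n-1)`). -/
def pairMax (hn : 4 ≤ n) : PairIdx n :=
  ⟨(⟨n - 2, by omega⟩, ⟨n - 1, by omega⟩), ⟨show 0 < n - 2 by omega, show n - 2 < n - 1 by omega⟩⟩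

/-!
Give `S = ⋀²(S^{(n-1,1)})` the basis `b(i₁,i₂)`, and let `S₁` be the preimage of `2R` under the
coefficient sum.  Modulo `2` the coefficient sum is the functional `x ∧ y ↦ ∑ₖ xₖ yₖ`, which is
visibly `𝔖_n`-invariant; it is well defined on `⋀²` because `∑ₖ xₖ² ≡ (∑ₖ xₖ)² = 0 mod 2` on
`S^{(n-1,1)}`.  As `2 b(n-1,n) = b(n-1,n) + b(n-1,n)`, the proposed basis is the image of the
standard one under `x ↦ x + sum(x) b(n-1,n)`, which doubles the coefficient sum and is injective
with image `S₁`.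
-/

section EvenSubmodule

variable {R} {ι M : Type*} [AddCommGroup M] [Module R M] (b : Module.Basis ι R M)

/-- The submodule of vectors whose coordinates with respect to `b` have sum divisible by `2`. -/
def evenSubmodule : Submodule R M :=
  Submodule.comap b.sumCoords (Ideal.span {2})

variable {b}

lemma mem_evenSubmodule {x : M} : x ∈ evenSubmodule b ↔ 2 ∣ b.sumCoords x :=
  Ideal.mem_span_singleton

lemma mem_evenSubmodule_iff_exists_sum [Fintype ι] {x : M} :
    x ∈ evenSubmodule b ↔ ∃ α : ι → R, x = ∑ i, α i • b i ∧ 2 ∣ ∑ i, α i := by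
  have sumCoords_sum (α : ι → R) : b.sumCoords (∑ i, α i • b i) = ∑ i, α i := by
    simp only [map_sum, map_smul, Module.Basis.sumCoords_self_apply, smul_eq_mul, mul_one]
  rw [mem_evenSubmodule]
  constructor
  · intro hx
    exact ⟨b.repr x, (b.sum_repr x).symm, by rwa [← sumCoords_sum, b.sum_repr]⟩
  · rintro ⟨α, rfl, hα⟩
    rwa [sumCoords_sum]

variable (b)

lemma ker_mkQ_comp_sumCoords :
    LinearMap.ker ((Ideal.span {(2 : R)}).mkQ ∘ₗ b.sumCoords) = evenSubmodule b := by
  rw [LinearMap.ker_comp, Submodule.ker_mkQ, evenSubmodule]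

lemma card_quotient_evenSubmodule [Nonempty ι] :
    Nat.card (M ⧸ evenSubmodule b) = Nat.card (R ⧸ Ideal.span {(2 : R)}) := by
  obtain ⟨m⟩ := ‹Nonempty ι›
  have sumCoords_surjective : Function.Surjective b.sumCoords := fun r => ⟨r • b m, by simp⟩
  have mkQ_comp_surjective :
      Function.Surjective ((Ideal.span {(2 : R)}).mkQ ∘ₗ b.sumCoords) :=
    (Submodule.mkQ_surjective _).comp sumCoords_surjective
  rw [← ker_mkQ_comp_sumCoords]
  exact Nat.card_congr (LinearMap.quotKerEquivOfSurjective _ mkQ_comp_surjective).toEquiv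

variable (m : ι)

lemma transvection_sumCoords_comp_basis :
    LinearMap.transvection b.sumCoords (b m) ∘ b = fun i => b i + b m := by
  ext i
  simp [LinearMap.transvection.apply]

lemma sumCoords_transvection_sumCoords (x : M) :
    b.sumCoords (LinearMap.transvection b.sumCoords (b m) x) = 2 * b.sumCoords x := by
  rw [LinearMap.transvection.apply, map_add, map_smul, Module.Basis.sumCoords_self_apply,
    smul_eq_mul, mul_one, two_mul]

lemma transvection_sumCoords_injective (h2 : (2 : R) ∈ nonZeroDivisors R) :
    Function.Injective (LinearMap.transvection b.sumCoords (b m)) := by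
  rw [injective_iff_map_eq_zero]
  intro x hx
  have sum_mul_two : b.sumCoords x * 2 = 0 := by
    rw [mul_comm, ← sumCoords_transvection_sumCoords b m, hx, map_zero]
  have sum_eq_zero : b.sumCoords x = 0 :=
    (mul_right_mem_nonZeroDivisors_eq_zero_iff h2).1 sum_mul_two
  simpa [LinearMap.transvection.apply, sum_eq_zero] using hx

lemma range_transvection_sumCoords :
    LinearMap.range (LinearMap.transvection b.sumCoords (b m)) = evenSubmodule b := by
  ext x
  rw [mem_evenSubmodule]
  constructor
  · rintro ⟨y, rfl⟩
    exact ⟨b.sumCoords y, sumCoords_transvection_sumCoords b m y⟩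
  · rintro ⟨c, hc⟩
    refine ⟨x - c • b m, ?_⟩
    simp only [LinearMap.transvection.apply, map_sub, map_smul, hc,
      Module.Basis.sumCoords_self_apply]
    module

lemma linearIndependent_basis_add (h2 : (2 : R) ∈ nonZeroDivisors R) :
    LinearIndependent R fun i => b i + b m := by
  rw [← transvection_sumCoords_comp_basis]
  exact b.linearIndependent.map' _
    (LinearMap.ker_eq_bot.2 (transvection_sumCoords_injective b m h2))

lemma span_range_basis_add : Submodule.span R (Set.range fun i => b i + b m) = evenSubmodule b := by
  rw [← transvection_sumCoords_comp_basis, Set.range_comp, Submodule.span_image, b.span_eq,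
    Submodule.map_top, range_transvection_sumCoords]

end EvenSubmodule

section SpechtBasis

variable {R n}

lemma sum_eq_zero_of_mem_spechtW (x : spechtW R n) : ∑ i, x.1 i = 0 := by
  simpa [spechtW, sumFunctional] using x.2

lemma spechtE_apply_of_pos (h0 : 0 < n) (i : Fin n) {k : Fin n} (hk : 0 < k.val) :
    (spechtE R n h0 i).1 k = if k = i then 1 else 0 := by
  have k_ne_zero : k ≠ ⟨0, h0⟩ := fun h => hk.ne' (congrArg Fin.val h)
  simp [spechtE, Pi.single_apply, k_ne_zero]

lemma spechtE_apply_zero (h0 : 0 < n) {i : Fin n} (hi : 0 < i.val) :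
    (spechtE R n h0 i).1 ⟨0, h0⟩ = -1 := by
  have i_ne_zero : ⟨0, h0⟩ ≠ i := fun h => hi.ne (congrArg Fin.val h)
  simp [spechtE, i_ne_zero]

lemma spechtE_zero (h0 : 0 < n) : spechtE R n h0 ⟨0, h0⟩ = 0 := by
  simp [spechtE]

lemma sum_smul_spechtE (h0 : 0 < n) (x : spechtW R n) : ∑ i, x.1 i • spechtE R n h0 i = x := by
  ext k
  simp [spechtE, smul_sub, Finset.sum_apply, Pi.single_apply, sum_eq_zero_of_mem_spechtW]

variable (R)

lemma linearIndependent_spechtE (h0 : 0 < n) :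
    LinearIndependent R fun i : {i : Fin n // 0 < i.val} => spechtE R n h0 i := by
  refine .of_pairwise_dual_eq_zero_one _
    (fun k => LinearMap.proj k.1 ∘ₗ (spechtW R n).subtype) (fun k i hki => ?_) fun k => ?_
  · have k_ne_i : k.1 ≠ i.1 := Subtype.coe_ne_coe.2 hki
    simp [spechtE_apply_of_pos h0 _ k.2, k_ne_i]
  · simp [spechtE_apply_of_pos h0 _ k.2]

lemma span_range_spechtE (h0 : 0 < n) :
    Submodule.span R (Set.range fun i : {i : Fin n // 0 < i.val} => spechtE R n h0 i) = ⊤ := by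
  refine eq_top_iff.2 fun x _ => ?_
  rw [← sum_smul_spechtE h0 x]
  refine Submodule.sum_mem _ fun i _ => Submodule.smul_mem _ _ ?_
  by_cases hi : 0 < i.val
  · exact Submodule.subset_span ⟨⟨i, hi⟩, rfl⟩
  · obtain rfl : i = ⟨0, h0⟩ := Fin.ext (Nat.eq_zero_of_not_pos hi)
    simp [spechtE_zero]

/-- The basis `e(1,i)`, `i ≠ 1`, of the natural Specht lattice `S^{(n-1,1)}`. -/
def spechtEBasis (h0 : 0 < n) : Module.Basis {i : Fin n // 0 < i.val} R (spechtW R n) :=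
  .mk (linearIndependent_spechtE R h0) (span_range_spechtE R h0).ge

variable (n) in
/-- `PairIdx n` as the type of increasing pairs of nonzero indices, the shape in which
`Module.Basis.exteriorPower` indexes its vectors. -/
def pairIdxEquivOrderEmb : PairIdx n ≃ (Fin 2 ↪o {i : Fin n // 0 < i.val}) where
  toFun q := .ofStrictMono ![⟨q.1.1, q.2.1⟩, ⟨q.1.2, q.2.1.trans q.2.2⟩] <| by
    simpa [StrictMono, Fin.forall_fin_two] using q.2.2
  invFun f := ⟨(f 0, f 1), (f 0).2, f.strictMono Fin.zero_lt_one⟩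
  left_inv _ := rfl
  right_inv f := by
    ext k
    fin_cases k <;> rfl

/-- The standard basis `b(i₁,i₂)` of `S^{(n-2,1,1)} = ⋀²(S^{(n-1,1)})`. -/
def spechtBBBasis (h0 : 0 < n) : Module.Basis (PairIdx n) R (⋀[R]^2 (spechtW R n)) :=
  ((spechtEBasis R h0).exteriorPower 2).reindex
    ((pairIdxEquivOrderEmb n).trans Set.powersetCard.ofFinEmbEquiv).symm

lemma wedgePair_eq_ιMulti {M : Type*} [AddCommGroup M] [Module R M] (x y : M) :
    wedgePair x y = exteriorPower.ιMulti R 2 ![x, y] :=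
  rfl

lemma spechtBBBasis_apply (h0 : 0 < n) (q : PairIdx n) :
    spechtBBBasis R h0 q = spechtBB R n h0 q.1.1 q.1.2 := by
  simp only [spechtBBBasis, Module.Basis.reindex_apply, Equiv.symm_symm, Equiv.trans_apply,
    exteriorPower.basis_apply, exteriorPower.ιMulti_family, Equiv.symm_apply_apply, spechtBB,
    wedgePair_eq_ιMulti]
  congr 1
  ext k : 1
  fin_cases k <;> exact Module.Basis.mk_apply ..

end SpechtBasis

section Invariance

variable {R n}

lemma two_dvd_sq_sum_sub_sum_sq {ι : Type*} (s : Finset ι) (f : ι → R) :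
    2 ∣ (∑ i ∈ s, f i) ^ 2 - ∑ i ∈ s, f i ^ 2 := by
  classical
  induction s using Finset.induction_on with
  | empty => simp
  | insert a s ha ih =>
    obtain ⟨c, hc⟩ := ih
    rw [Finset.sum_insert ha, Finset.sum_insert ha]
    exact ⟨c + f a * ∑ i ∈ s, f i, by linear_combination hc⟩

lemma two_dvd_sum_sq_of_mem_spechtW (x : spechtW R n) : 2 ∣ ∑ k, x.1 k ^ 2 := by
  simpa [sum_eq_zero_of_mem_spechtW] using two_dvd_sq_sum_sub_sum_sq univ x.1

variable (R n)

/-- The standard dot product `(x, y) ↦ ∑ₖ xₖ yₖ` modulo `2` on the natural Specht lattice, as an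
alternating form; it alternates because the coefficient sums vanish. -/
def dotModTwo : spechtW R n [⋀^Fin 2]→ₗ[R] (R ⧸ Ideal.span {(2 : R)}) where
  toMultilinearMap := (Ideal.span {(2 : R)}).mkQ.compMultilinearMap <|
    ∑ k, (MultilinearMap.mkPiAlgebra R (Fin 2) R).compLinearMap
      fun _ => LinearMap.proj k ∘ₗ (spechtW R n).subtype
  map_eq_zero_of_eq' v i j hv hij := by
    have v_zero_eq_v_one : v 0 = v 1 := by
      fin_cases i <;> fin_cases j <;> simp_all
    simpa [v_zero_eq_v_one, sq] using
      (Ideal.Quotient.eq_zero_iff_dvd _ _).2 (two_dvd_sum_sq_of_mem_spechtW (v 1))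

lemma dotModTwo_apply (v : Fin 2 → spechtW R n) :
    dotModTwo R n v = Ideal.Quotient.mk _ (∑ k, (v 0).1 k * (v 1).1 k) := by
  simp [dotModTwo]

/-- The linear form `x ∧ y ↦ ∑ₖ xₖ yₖ mod 2` on `⋀²(S^{(n-1,1)})`. -/
def dotFormModTwo : ⋀[R]^2 (spechtW R n) →ₗ[R] R ⧸ Ideal.span {(2 : R)} :=
  exteriorPower.alternatingMapLinearEquiv (dotModTwo R n)

variable {R n}

lemma dotFormModTwo_ιMulti (v : Fin 2 → spechtW R n) :
    dotFormModTwo R n (exteriorPower.ιMulti R 2 v) =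
      Ideal.Quotient.mk _ (∑ k, (v 0).1 k * (v 1).1 k) := by
  rw [dotFormModTwo, exteriorPower.alternatingMapLinearEquiv_apply_ιMulti, dotModTwo_apply]

lemma sum_spechtE_mul_spechtE (h0 : 0 < n) {i j : Fin n} (hi : 0 < i.val) (hij : i < j) :
    ∑ k, (spechtE R n h0 i).1 k * (spechtE R n h0 j).1 k = 1 := by
  rw [Finset.sum_eq_single ⟨0, h0⟩]
  · simp [spechtE_apply_zero h0 hi, spechtE_apply_zero h0 (hi.trans hij)]
  · intro k _ hk
    have k_pos : 0 < k.val := Nat.pos_of_ne_zero fun h => hk (Fin.ext h)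
    rw [spechtE_apply_of_pos h0 i k_pos, spechtE_apply_of_pos h0 j k_pos]
    grind
  · simp

lemma dotFormModTwo_eq_mkQ_comp_sumCoords (h0 : 0 < n) :
    dotFormModTwo R n = (Ideal.span {(2 : R)}).mkQ ∘ₗ (spechtBBBasis R h0).sumCoords := by
  refine (spechtBBBasis R h0).ext fun q => ?_
  rw [LinearMap.comp_apply, Module.Basis.sumCoords_self_apply, spechtBBBasis_apply, spechtBB,
    wedgePair_eq_ιMulti, dotFormModTwo_ιMulti]
  exact congrArg _ (sum_spechtE_mul_spechtE h0 q.2.1 q.2.2)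

lemma exteriorPowerMap_eq_map {M N : Type*} [AddCommGroup M] [Module R M] [AddCommGroup N]
    [Module R N] (k : ℕ) (f : M →ₗ[R] N) : exteriorPowerMap k f = exteriorPower.map k f := by
  refine exteriorPower.linearMap_ext (AlternatingMap.ext fun v => ?_)
  rw [LinearMap.compAlternatingMap_apply, LinearMap.compAlternatingMap_apply,
    exteriorPower.map_apply_ιMulti]
  exact Subtype.ext (ExteriorAlgebra.map_apply_ιMulti f v)

lemma dotFormModTwo_comp_spechtPerm (σ : Equiv.Perm (Fin n)) :
    dotFormModTwo R n ∘ₗ exteriorPowerMap 2 (spechtPerm R n σ) = dotFormModTwo R n := by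
  refine exteriorPower.linearMap_ext (AlternatingMap.ext fun v => ?_)
  simp only [LinearMap.compAlternatingMap_apply, LinearMap.comp_apply, exteriorPowerMap_eq_map,
    exteriorPower.map_apply_ιMulti, dotFormModTwo_ιMulti]
  exact congrArg _ (Equiv.sum_comp σ⁻¹ fun k => (v 0).1 k * (v 1).1 k)

lemma ker_dotFormModTwo (h0 : 0 < n) :
    LinearMap.ker (dotFormModTwo R n) = evenSubmodule (spechtBBBasis R h0) := by
  rw [dotFormModTwo_eq_mkQ_comp_sumCoords h0, ker_mkQ_comp_sumCoords]

lemma exteriorPowerMap_spechtPerm_mem_evenSubmodule (h0 : 0 < n) (σ : Equiv.Perm (Fin n))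
    {x : ⋀[R]^2 (spechtW R n)} (hx : x ∈ evenSubmodule (spechtBBBasis R h0)) :
    exteriorPowerMap 2 (spechtPerm R n σ) x ∈ evenSubmodule (spechtBBBasis R h0) := by
  rw [← ker_dotFormModTwo h0, LinearMap.mem_ker] at hx ⊢
  rw [← LinearMap.comp_apply, dotFormModTwo_comp_spechtPerm, hx]

end Invariance

theorem specht_sublattice_S1_general {R : Type*} [CommRing R] (h2 : (2 : R) ∈ nonZeroDivisors R)
    {n : ℕ} (m : PairIdx n) :
    ∃ S₁ : Submodule R (⋀[R]^2 (spechtW R n)),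
      (S₁ : Set (⋀[R]^2 (spechtW R n))) =
        {x | ∃ α : PairIdx n → R,
          x = ∑ q : PairIdx n, α q • spechtBB R n m.1.1.pos q.1.1 q.1.2 ∧
          ∃ c : R, ∑ q : PairIdx n, α q = 2 * c} ∧
      (∀ σ : Equiv.Perm (Fin n), ∀ x ∈ S₁, exteriorPowerMap 2 (spechtPerm R n σ) x ∈ S₁) ∧
      Nat.card ((⋀[R]^2 (spechtW R n)) ⧸ S₁) = Nat.card (R ⧸ Ideal.span {(2 : R)}) ∧
      LinearIndependent R (fun q : PairIdx n =>
        if q = m then (2 : R) • spechtBB R n m.1.1.pos m.1.1 m.1.2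
        else spechtBB R n m.1.1.pos q.1.1 q.1.2 + spechtBB R n m.1.1.pos m.1.1 m.1.2) ∧
      Submodule.span R (Set.range fun q : PairIdx n =>
        if q = m then (2 : R) • spechtBB R n m.1.1.pos m.1.1 m.1.2
        else spechtBB R n m.1.1.pos q.1.1 q.1.2 + spechtBB R n m.1.1.pos m.1.1 m.1.2) = S₁ := by
  let b := spechtBBBasis R m.1.1.pos
  have family_eq : (fun q => if q = m then (2 : R) • b m else b q + b m) = fun q => b q + b m := by
    ext1 q
    split_ifs with h
    · rw [h, two_smul]
    · rfl
  have : Nonempty (PairIdx n) := ⟨m⟩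
  simp only [← spechtBBBasis_apply]
  refine ⟨evenSubmodule b, Set.ext fun _ => mem_evenSubmodule_iff_exists_sum,
    fun σ _ => exteriorPowerMap_spechtPerm_mem_evenSubmodule _ σ, card_quotient_evenSubmodule b,
    ?_, ?_⟩
  · exact family_eq ▸ linearIndependent_basis_add b m h2
  · exact family_eq ▸ span_range_basis_add b m

lemma card_padicInt_quotient_span_prime (p : ℕ) [Fact p.Prime] :
    Nat.card (ℤ_[p] ⧸ Ideal.span {(p : ℤ_[p])}) = p := by
  rw [← PadicInt.maximalIdeal_eq_span_p]
  exact (Nat.card_congr PadicInt.residueField.toEquiv).trans (Nat.card_zmod p)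

/-- Let `n ≥ 4` and let `S = S^{(n-2,1,1)}_{ℤ₂} = ⋀²(S^{(n-1,1)}_{ℤ₂})` be the Specht
`ℤ₂𝔖_n`-lattice with standard basis `{b(i₁,i₂) : 2 ≤ i₁ < i₂ ≤ n}`.  Then the set
`S₁ = {Σ α(i₁,i₂)·b(i₁,i₂) : Σ α(i₁,i₂) ≡ 0 mod 2}` is a `ℤ₂𝔖_n`-submodule of `S` of index `2`,
and a `ℤ₂`-basis of `S₁` is given by
`{b(i₁,i₂) + b(n−1,n) : (i₁,i₂) ≠ (n−1,n)} ∪ {2·b(n−1,n)}`. -/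
theorem specht_sublattice_S1 (n : ℕ) (hn : 4 ≤ n) :
    ∃ S₁ : Submodule ℤ_[2] (⋀[ℤ_[2]]^2 ↥(spechtW ℤ_[2] n)),
      (S₁ : Set (⋀[ℤ_[2]]^2 ↥(spechtW ℤ_[2] n))) =
        {x | ∃ α : PairIdx n → ℤ_[2],
          x = ∑ q : PairIdx n, α q • spechtBB ℤ_[2] n (by omega) q.1.1 q.1.2 ∧
          ∃ c : ℤ_[2], (∑ q : PairIdx n, α q) = 2 * c} ∧
      (∀ (σ : Equiv.Perm (Fin n)), ∀ x ∈ S₁,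
        exteriorPowerMap 2 (spechtPerm ℤ_[2] n σ) x ∈ S₁) ∧
      Nat.card ((⋀[ℤ_[2]]^2 ↥(spechtW ℤ_[2] n)) ⧸ S₁) = 2 ∧
      LinearIndependent ℤ_[2] (fun q : PairIdx n =>
        if q = pairMax n hn then
          (2 : ℤ_[2]) • spechtBB ℤ_[2] n (by omega) (pairMax n hn).1.1 (pairMax n hn).1.2
        else spechtBB ℤ_[2] n (by omega) q.1.1 q.1.2
          + spechtBB ℤ_[2] n (by omega) (pairMax n hn).1.1 (pairMax n hn).1.2) ∧
      Submodule.span ℤ_[2] (Set.range (fun q : PairIdx n =>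
        if q = pairMax n hn then
          (2 : ℤ_[2]) • spechtBB ℤ_[2] n (by omega) (pairMax n hn).1.1 (pairMax n hn).1.2
        else spechtBB ℤ_[2] n (by omega) q.1.1 q.1.2
          + spechtBB ℤ_[2] n (by omega) (pairMax n hn).1.1 (pairMax n hn).1.2)) = S₁ := by
  have h2 : (2 : ℤ_[2]) ∈ nonZeroDivisors ℤ_[2] := mem_nonZeroDivisors_of_ne_zero two_ne_zero
  have index : Nat.card (ℤ_[2] ⧸ Ideal.span {(2 : ℤ_[2])}) = 2 :=
    card_padicInt_quotient_span_prime 2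
  simpa only [index] using specht_sublattice_S1_general h2 (pairMax n hn)

end
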